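/- Let 𝓓 = (Ω, 𝓑) be a β(i) design with parameter (v, k, d), where v ≤ 2k, k−d ≥ i+2, d > 0 and i ≥ 17. If 𝓓 is also a β(i+1) design, then 2i−6 ≤ k−d ≤ 2i. -/

import Mathlib

open Finset

variable {α : Type*} [Fintype α] [DecidableEq α]

/-- `𝓑` is a design on the finite type `α` of cardinality `v`, with block size `k` and
maximal pairwise block intersection size `d`. -/
def IsDesign (𝓑 : Finset (Finset α)) (v k d : ℕ) : Prop :=
  Fintype.card α = v ∧ 2 ≤ 𝓑.card ∧ d < k ∧ k < v ∧
  (∀ B ∈ 𝓑, B.card = k) ∧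
  (∀ B ∈ 𝓑, ∀ C ∈ 𝓑, B ≠ C → (B ∩ C).card ≤ d) ∧
  (∃ B ∈ 𝓑, ∃ C ∈ 𝓑, B ≠ C ∧ (B ∩ C).card = d)

/-- `𝓑` is a `β(i)` design with parameters `(v, k, d)`: a design such that
`1 ≤ i ≤ (v - d + 1)/2` and every `(d + 2i - 1)`-element subset `X` of `Ω` admits a
unique block `B` with `|X ∩ B| ≥ d + i`. -/
def IsBetaDesign (𝓑 : Finset (Finset α)) (v k d i : ℕ) : Prop :=
  IsDesign 𝓑 v k d ∧ 1 ≤ i ∧ 2 * i ≤ v - d + 1 ∧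
  ∀ X : Finset α, X.card = d + 2 * i - 1 →
    ∃! B, B ∈ 𝓑 ∧ d + i ≤ (X ∩ B).card

/-!
Fix a block `B₀`, a `(d+i)`-subset `U` of it and an `i`-set `Z` disjoint from it. Counting the
blocks that contain `Z` and meet `B₀` in `d` points of `U`, once with the `β(i)` and once with the
`β(i+1)` condition, gives `d = i * m` and `v = k + i + s + s * m`, where `s = k - d - i`; so
`v ≤ 2 * k` says precisely that `s ≤ i`.

For the lower bound, take complements of the blocks: they form a `β(s+1)` design, whose defining
condition says that a polynomial in the Laplacian of the Johnson graph maps the characteristic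
vector of the design to a constant vector. Besides known factors this polynomial has a factor of
degree at most `s`, the Lloyd polynomial. As in Lloyd's theorem on perfect codes, its real zeros are
eigenvalues of the Johnson scheme, so it cannot have opposite signs at two consecutive eigenvalues.
Its values there are Hahn polynomials, and if `i ≥ s + 7` and `s ≥ 2`, those of degrees `3` and `4`
(`4` and `5` when `s = 2`) have opposite signs.
-/

section LocalCounting

theorem IsDesign.exists_card_sdiff {𝓑 : Finset (Finset α)} {v k d : ℕ} (h𝓑 : IsDesign 𝓑 v k d) :
    ∃ B ∈ 𝓑, ∃ C ∈ 𝓑, #(C \ B) + d = k := by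
  obtain ⟨-, -, -, -, hk, -, B, hB, C, hC, -, hd⟩ := h𝓑
  refine ⟨B, hB, C, hC, ?_⟩
  rw [← hd, inter_comm B C, card_sdiff_add_card_inter, hk C hC]

theorem IsBetaDesign.add_le_blockSize {𝓑 : Finset (Finset α)} {v k d j : ℕ}
    (h𝓑 : IsBetaDesign 𝓑 v k d j) : d + j ≤ k := by
  obtain ⟨⟨hv, -, -, -, hk, -⟩, hj, hjv, huniq⟩ := h𝓑
  obtain ⟨X, -, hX⟩ := exists_subset_card_eq (s := (univ : Finset α)) (n := d + 2 * j - 1)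
    (by rw [card_univ, hv]; omega)
  obtain ⟨B, ⟨hB, hXB⟩, -⟩ := huniq X hX
  exact hXB.trans ((card_le_card inter_subset_right).trans_eq (hk B hB))

/-- The blocks which contain `Z` and meet the block `B₀` in exactly `d` points, all of them in `U`.
It is used for `U ⊆ B₀` and `Z` disjoint from `B₀`. -/
def extensions {Ω : Type*} [DecidableEq Ω] (𝓑 : Finset (Finset Ω)) (d : ℕ) (B₀ U Z : Finset Ω) :
    Finset (Finset Ω) :=
  {C ∈ 𝓑 | Z ⊆ C ∧ C ∩ B₀ ⊆ U ∧ #(C ∩ B₀) = d}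

variable {𝓑 : Finset (Finset α)} {v k d j : ℕ} {B₀ U Z : Finset α}

theorem IsBetaDesign.mem_extensions_iff (h𝓑 : IsBetaDesign 𝓑 v k d j) (hB₀ : B₀ ∈ 𝓑)
    (hU : U ⊆ B₀) (hZ : Disjoint Z B₀) (hUj : #U + 1 = d + j) (hZj : #Z = j) {C : Finset α} :
    C ∈ extensions 𝓑 d B₀ U Z ↔ C ∈ 𝓑 ∧ d + j ≤ #((U ∪ Z) ∩ C) := by
  have hsplit : #((U ∪ Z) ∩ C) = #(U ∩ C) + #(Z ∩ C) := by
    rw [union_inter_distrib_right, card_union_of_disjoint]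
    exact (hZ.symm.mono_left hU).mono inter_subset_left inter_subset_left
  have hUC : U ∩ C ⊆ C ∩ B₀ := fun x hx =>
    mem_inter.2 ⟨(mem_inter.1 hx).2, hU (mem_inter.1 hx).1⟩
  rw [extensions, mem_filter, hsplit]
  refine and_congr_right fun hC => ⟨?_, fun hle => ?_⟩
  · rintro ⟨hZC, hCU, hCd⟩
    rw [inter_eq_left.2 hZC, hZj, ← hCd, hUC.antisymm fun x hx =>
      mem_inter.2 ⟨hCU hx, (mem_inter.1 hx).1⟩]
  · have hne : C ≠ B₀ := by
      rintro rfl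
      have := card_le_card (inter_subset_left : U ∩ C ⊆ U)
      rw [disjoint_iff_inter_eq_empty.1 hZ, card_empty] at hle
      omega
    have hCd : #(C ∩ B₀) ≤ d := h𝓑.1.2.2.2.2.2.1 C hC B₀ hB₀ hne
    have hle' := card_le_card hUC
    have hZle := card_le_card (inter_subset_left : Z ∩ C ⊆ Z)
    have hZC : Z ∩ C = Z := eq_of_subset_of_card_le inter_subset_left (by omega)
    have hCU : U ∩ C = C ∩ B₀ := eq_of_subset_of_card_le hUC (by omega)
    exact ⟨inter_eq_left.1 hZC, hCU ▸ inter_subset_left, by omega⟩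

theorem IsBetaDesign.card_extensions_eq_one (h𝓑 : IsBetaDesign 𝓑 v k d j) (hB₀ : B₀ ∈ 𝓑)
    (hU : U ⊆ B₀) (hZ : Disjoint Z B₀) (hUj : #U + 1 = d + j) (hZj : #Z = j) :
    #(extensions 𝓑 d B₀ U Z) = 1 := by
  have hX : #(U ∪ Z) = d + 2 * j - 1 := by
    rw [card_union_of_disjoint (hZ.symm.mono_left hU)]; omega
  obtain ⟨C, hC, huniq⟩ := h𝓑.2.2.2 _ hX
  have hmem := fun D => h𝓑.mem_extensions_iff hB₀ hU hZ hUj hZj (C := D)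
  exact card_eq_one.2 ⟨C, eq_singleton_iff_unique_mem.2
    ⟨(hmem C).2 hC, fun D hD => huniq D ((hmem D).1 hD)⟩⟩

theorem IsBetaDesign.card_extensions_mul (h𝓑 : IsBetaDesign 𝓑 v k d j) (hB₀ : B₀ ∈ 𝓑)
    (hU : U ⊆ B₀) (hZ : Disjoint Z B₀) (hUj : #U = d + j) (hZj : #Z = j) :
    #(extensions 𝓑 d B₀ U Z) * j = d + j := by
  rw [← hUj, ← mul_one #U]
  refine card_mul_eq_card_mul (fun C q => q ∉ C) (fun C hC => ?_) fun q hq => ?_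
  · obtain ⟨-, -, hCU, hCd⟩ := mem_filter.1 hC
    have hUC : U ∩ C = C ∩ B₀ := Subset.antisymm
      (fun x hx => mem_inter.2 ⟨(mem_inter.1 hx).2, hU (mem_inter.1 hx).1⟩)
      fun x hx => mem_inter.2 ⟨hCU hx, (mem_inter.1 hx).1⟩
    have := card_sdiff_add_card_inter U C
    rw [bipartiteAbove, ← sdiff_eq_filter]
    rw [hUC] at this
    omega
  · have herase : bipartiteBelow (fun C q => q ∉ C) (extensions 𝓑 d B₀ U Z) q =
        extensions 𝓑 d B₀ (U.erase q) Z := by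
      ext C
      simp only [bipartiteBelow, extensions, mem_filter, subset_erase, mem_inter, hU hq, and_true]
      tauto
    rw [herase]
    refine h𝓑.card_extensions_eq_one hB₀ ((erase_subset q U).trans hU) hZ ?_ hZj
    rw [card_erase_add_one hq, hUj]

theorem IsBetaDesign.card_extensions_mul_add {r : ℕ} (h𝓑 : IsBetaDesign 𝓑 v k d (j + 1))
    (hk : k = d + j + r) (hB₀ : B₀ ∈ 𝓑) (hU : U ⊆ B₀) (hZ : Disjoint Z B₀) (hUj : #U = d + j)
    (hZj : #Z = j) : #(extensions 𝓑 d B₀ U Z) * r + j + k = v := by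
  obtain ⟨⟨hv, -, -, -, hblock, -⟩, -⟩ := id h𝓑
  have hcompl : #(Z ∪ B₀)ᶜ + j + k = v := by
    rw [add_assoc, ← hZj, ← hblock B₀ hB₀, ← card_union_of_disjoint hZ, card_compl_add_card, hv]
  rw [← hcompl, ← mul_one #(Z ∪ B₀)ᶜ]
  congr 2
  refine card_mul_eq_card_mul (fun C q => q ∈ C) (fun C hC => ?_) fun q hq => ?_
  · obtain ⟨hC𝓑, hZC, -, hCd⟩ := mem_filter.1 hC
    have hinter : #(C ∩ (Z ∪ B₀)) = j + d := by
      rw [inter_union_distrib_left, inter_eq_right.2 hZC,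
        card_union_of_disjoint (hZ.mono_right inter_subset_right), hZj, hCd]
    have hsdiff : bipartiteAbove (fun C q => q ∈ C) (Z ∪ B₀)ᶜ C = C \ (Z ∪ B₀) := by
      ext x
      simp only [bipartiteAbove, mem_filter, mem_compl, mem_sdiff, and_comm]
    have := card_sdiff_add_card_inter C (Z ∪ B₀)
    rw [hsdiff]
    rw [hinter, hblock C hC𝓑] at this
    omega
  · obtain ⟨hqZ, hqB⟩ : q ∉ Z ∧ q ∉ B₀ := by simpa [not_or] using hq
    have hinsert : bipartiteBelow (fun C q => q ∈ C) (extensions 𝓑 d B₀ U Z) q =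
        extensions 𝓑 d B₀ U (insert q Z) := by
      ext C
      simp only [bipartiteBelow, extensions, mem_filter, insert_subset_iff]
      tauto
    rw [hinsert]
    refine h𝓑.card_extensions_eq_one hB₀ hU (disjoint_insert_left.2 ⟨hqB, hZ⟩) (by omega) ?_
    rw [card_insert_of_notMem hqZ, hZj]

theorem IsBetaDesign.exists_subset_disjoint (h𝓑 : IsBetaDesign 𝓑 v k d j) :
    ∃ B₀ ∈ 𝓑, ∃ U ⊆ B₀, ∃ Z, Disjoint Z B₀ ∧ #U = d + j ∧ #Z = j := by
  obtain ⟨B₀, hB₀, C, -, hCd⟩ := h𝓑.1.exists_card_sdiff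
  have hle := h𝓑.add_le_blockSize
  obtain ⟨U, hU, hUj⟩ := exists_subset_card_eq (hle.trans_eq (h𝓑.1.2.2.2.2.1 B₀ hB₀).symm)
  obtain ⟨Z, hZ, hZj⟩ := exists_subset_card_eq (show j ≤ #(C \ B₀) by omega)
  exact ⟨B₀, hB₀, U, hU, Z, disjoint_sdiff_self_left.mono_left hZ, hUj, hZj⟩

theorem IsBetaDesign.dvd_intersectionSize (h𝓑 : IsBetaDesign 𝓑 v k d j) : j ∣ d := by
  obtain ⟨B₀, hB₀, U, hU, Z, hZ, hUj, hZj⟩ := h𝓑.exists_subset_disjoint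
  exact (Nat.dvd_add_left dvd_rfl).1 ⟨_, by
    rw [mul_comm, h𝓑.card_extensions_mul hB₀ hU hZ hUj hZj]⟩

theorem IsBetaDesign.exists_parameters {i s : ℕ} (h𝓑 : IsBetaDesign 𝓑 v k d i)
    (h𝓑' : IsBetaDesign 𝓑 v k d (i + 1)) (hd : 0 < d) (hk : k = d + i + s) :
    ∃ m, i + 1 ≤ m ∧ d = i * m ∧ v = k + (i + s + s * m) := by
  obtain ⟨B₀, hB₀, U, hU, Z, hZ, hUi, hZi⟩ := h𝓑.exists_subset_disjoint
  have hmul := h𝓑.card_extensions_mul hB₀ hU hZ hUi hZi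
  have hv := h𝓑'.card_extensions_mul_add hk hB₀ hU hZ hUi hZi
  obtain ⟨m, hm⟩ : ∃ m, #(extensions 𝓑 d B₀ U Z) = m + 1 :=
    Nat.exists_eq_succ_of_ne_zero fun h => by simp only [h, zero_mul] at hmul; omega
  rw [hm] at hmul hv
  have hdm : d = i * m := by linarith
  have hdvd : i + 1 ∣ m :=
    (Nat.coprime_self_add_left.2 (Nat.coprime_one_left i)).dvd_of_dvd_mul_left
      (hdm ▸ h𝓑'.dvd_intersectionSize)
  refine ⟨m, Nat.le_of_dvd (Nat.pos_of_mul_pos_left (hdm ▸ hd)) hdvd, hdm, ?_⟩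
  linarith

end LocalCounting

section ComplementaryDesign

theorem card_compl_inter_compl_add (B C : Finset α) :
    #(Bᶜ ∩ Cᶜ) + (#B + #C) = Fintype.card α + #(B ∩ C) := by
  rw [← compl_union, ← card_union_add_card_inter, ← add_assoc, card_compl_add_card]

variable {𝓑 : Finset (Finset α)} {v k d j : ℕ}

theorem IsDesign.two_mul_le (h𝓑 : IsDesign 𝓑 v k d) : 2 * k ≤ v + d := by
  obtain ⟨hv, -, -, -, hblock, -, B, hB, C, hC, -, hd⟩ := h𝓑
  have := card_compl_inter_compl_add B C
  rw [hblock B hB, hblock C hC, hv, hd] at this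
  omega

theorem IsDesign.compls (h𝓑 : IsDesign 𝓑 v k d) :
    IsDesign 𝓑.compls v (v - k) (v + d - 2 * k) := by
  have hvk := h𝓑.two_mul_le
  obtain ⟨hv, hcard, hdk, hkv, hblock, hle, B, hB, C, hC, hne, hd⟩ := h𝓑
  refine ⟨hv, by rwa [card_compls], by omega, by omega, fun D hD => ?_, fun D hD E hE hDE => ?_,
    Bᶜ, compl_mem_compls hB, Cᶜ, compl_mem_compls hC, compl_injective.ne hne, ?_⟩
  · have := card_compl_add_card D
    rw [hblock _ (mem_compls.1 hD), hv] at this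
    omega
  · have hdle := hle _ (mem_compls.1 hD) _ (mem_compls.1 hE) (compl_injective.ne hDE)
    have := card_compl_inter_compl_add Dᶜ Eᶜ
    rw [hblock _ (mem_compls.1 hD), hblock _ (mem_compls.1 hE), hv, compl_compl, compl_compl]
      at this
    omega
  · have := card_compl_inter_compl_add B C
    rw [hblock B hB, hblock C hC, hv, hd] at this
    omega

theorem IsBetaDesign.compls (h𝓑 : IsBetaDesign 𝓑 v k d j) :
    IsBetaDesign 𝓑.compls v (v - k) (v + d - 2 * k) (k - d + 1 - j) := by
  have hdj := h𝓑.add_le_blockSize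
  have hvk := h𝓑.1.two_mul_le
  obtain ⟨hdesign, hj, -, huniq⟩ := h𝓑
  refine ⟨hdesign.compls, by omega, by omega, fun X hX => ?_⟩
  obtain ⟨hv, -, -, -, hblock, -⟩ := hdesign
  have hXc : #Xᶜ = d + 2 * j - 1 := by
    rw [card_compl, hv, hX]; omega
  have hiff : ∀ B : Finset α, Bᶜ ∈ 𝓑 →
      (v + d - 2 * k + (k - d + 1 - j) ≤ #(X ∩ B) ↔ d + j ≤ #(Xᶜ ∩ Bᶜ)) := by
    intro B hB
    have := card_compl_inter_compl_add Xᶜ Bᶜ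
    rw [hXc, hblock _ hB, hv, compl_compl, compl_compl] at this
    omega
  obtain ⟨B, ⟨hB, hXB⟩, hBuniq⟩ := huniq Xᶜ hXc
  refine ⟨Bᶜ, ⟨compl_mem_compls hB, (hiff _ ?_).2 ?_⟩, fun C ⟨hC, hXC⟩ => ?_⟩
  · rwa [compl_compl]
  · rwa [compl_compl]
  · exact eq_compl_comm.1 (hBuniq Cᶜ ⟨mem_compls.1 hC, (hiff C (mem_compls.1 hC)).1 hXC⟩).symm

end ComplementaryDesign

section JohnsonScheme

open scoped Matrix
open Set (powersetCard)

variable {K : ℕ}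

/-- The Johnson graph on the `K`-element subsets of `α`: two of them are adjacent when they
differ by exchanging one point. -/
def johnsonGraph (α : Type*) [DecidableEq α] (K : ℕ) : SimpleGraph (powersetCard α K) where
  Adj C D := #(C.1 ∩ D.1) + 1 = K
  symm := ⟨fun C D h => by rwa [inter_comm]⟩
  loopless := ⟨fun C h => by simp only [inter_self, Set.powersetCard.card_eq] at h; omega⟩

instance (α : Type*) [DecidableEq α] (K : ℕ) : DecidableRel (johnsonGraph α K).Adj :=
  fun C D => inferInstanceAs (Decidable (#(C.1 ∩ D.1) + 1 = K))

/-- The matrix in the Bose–Mesner algebra of the Johnson scheme whose `(C, D)` entry is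
`h |C ∩ D|`. -/
def intersectionMatrix (α : Type*) [DecidableEq α] (K : ℕ) (h : ℕ → ℝ) :
    Matrix (powersetCard α K) (powersetCard α K) ℝ :=
  Matrix.of fun C D => h #(C.1 ∩ D.1)

theorem exists_insert_erase_eq {Ω : Type*} [DecidableEq Ω] {C D : Finset Ω}
    (hcard : #C = #D) (h : #(C ∩ D) + 1 = #C) : ∃ a ∈ C, ∃ b ∉ C, insert b (C.erase a) = D := by
  obtain ⟨a, ha⟩ : ∃ a, C \ D = {a} := card_eq_one.1 (by
    have := card_sdiff_add_card_inter C D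
    omega)
  obtain ⟨b, hb⟩ : ∃ b, D \ C = {b} := card_eq_one.1 (by
    have := card_sdiff_add_card_inter D C
    rw [inter_comm] at this
    omega)
  simp only [Finset.ext_iff, mem_sdiff, mem_singleton] at ha hb
  refine ⟨a, ((ha a).2 rfl).1, b, ((hb b).2 rfl).2, Finset.ext fun x => ?_⟩
  have hax := ha x
  have hbx := hb x
  simp only [mem_insert, mem_erase]
  grind

theorem sum_neighborFinset_johnsonGraph (C : powersetCard α K) (F : Finset α → ℝ) :
    ∑ D ∈ (johnsonGraph α K).neighborFinset C, F D =
      ∑ p ∈ C.1 ×ˢ C.1ᶜ, F (insert p.2 (C.1.erase p.1)) := by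
  have hCcard := Set.powersetCard.card_eq C
  symm
  refine sum_bij (fun p hp => ⟨insert p.2 (C.1.erase p.1), ?_⟩) ?_ ?_ ?_ ?_
  · obtain ⟨ha, hb⟩ := mem_product.1 hp
    have hb' : p.2 ∉ C.1.erase p.1 := fun h => mem_compl.1 hb (mem_of_mem_erase h)
    rw [Set.powersetCard.mem_iff, card_insert_of_notMem hb', card_erase_add_one ha, hCcard]
  · rintro ⟨a, b⟩ hp
    obtain ⟨ha, hb⟩ := mem_product.1 hp
    rw [SimpleGraph.mem_neighborFinset]
    change #(C.1 ∩ insert b (C.1.erase a)) + 1 = K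
    rw [inter_insert_of_notMem (mem_compl.1 hb), inter_eq_right.2 (erase_subset a C.1),
      card_erase_add_one ha, hCcard]
  · rintro ⟨a, b⟩ hp ⟨a', b'⟩ hp' heq
    simp only [mem_product, mem_compl] at hp hp'
    simp only [Subtype.mk.injEq, Finset.ext_iff, mem_insert, mem_erase] at heq
    have hb := heq b
    have ha := heq a
    grind
  · intro D hD
    have hadj : #(C.1 ∩ D.1) + 1 = K := (SimpleGraph.mem_neighborFinset _ _ _).1 hD
    obtain ⟨a, ha, b, hb, hD⟩ := exists_insert_erase_eq
      (hCcard.trans (Set.powersetCard.card_eq D).symm) (hadj.trans hCcard.symm)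
    exact ⟨(a, b), mem_product.2 ⟨ha, mem_compl.2 hb⟩, Subtype.ext hD⟩
  · exact fun _ _ => rfl

theorem johnsonGraph_lapMatrix_mulVec (C : powersetCard α K) (F : Finset α → ℝ) :
    ((johnsonGraph α K).lapMatrix ℝ *ᵥ fun D => F D) C =
      ∑ a ∈ C.1, ∑ b ∈ C.1ᶜ, (F C - F (insert b (C.1.erase a))) := by
  have hdegree := sum_neighborFinset_johnsonGraph C fun _ => 1
  have hsum := sum_neighborFinset_johnsonGraph C F
  rw [sum_const, SimpleGraph.card_neighborFinset_eq_degree, nsmul_eq_mul, mul_one] at hdegree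
  rw [SimpleGraph.lapMatrix_mulVec_apply, hdegree, hsum, ← sum_product', sum_mul,
    ← sum_sub_distrib]
  exact sum_congr rfl fun p _ => by rw [one_mul]

theorem card_insert_erase_inter {Ω : Type*} [DecidableEq Ω] {C : Finset Ω} (B : Finset Ω)
    {a b : Ω} (ha : a ∈ C) (hb : b ∉ C) :
    #(insert b (C.erase a) ∩ B) + (if a ∈ B then 1 else 0) =
      #(C ∩ B) + if b ∈ B then 1 else 0 := by
  have hinsert : #(insert b (C.erase a) ∩ B) = #(C.erase a ∩ B) + if b ∈ B then 1 else 0 := by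
    split_ifs with hbB
    · rw [insert_inter_of_mem hbB, card_insert_of_notMem]
      exact fun h => hb (mem_of_mem_erase (mem_inter.1 h).1)
    · rw [insert_inter_of_notMem hbB, add_zero]
  have herase : #(C.erase a ∩ B) + (if a ∈ B then 1 else 0) = #(C ∩ B) := by
    rw [erase_inter]
    split_ifs with haB
    · exact card_erase_add_one (mem_inter.2 ⟨ha, haB⟩)
    · rw [erase_eq_of_notMem fun h => haB (mem_inter.1 h).2, add_zero]
  omega

theorem sub_card_insert_erase_inter {Ω : Type*} [DecidableEq Ω] {C : Finset Ω} (B : Finset Ω)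
    {a b : Ω} (ha : a ∈ C) (hb : b ∉ C) (h : ℕ → ℝ) :
    h #(C ∩ B) - h #(insert b (C.erase a) ∩ B) =
      (if a ∉ B then 1 else 0) * (if b ∈ B then 1 else 0) * (h #(C ∩ B) - h (#(C ∩ B) + 1)) +
      (if a ∈ B then 1 else 0) * (if b ∉ B then 1 else 0) * (h #(C ∩ B) - h (#(C ∩ B) - 1)) := by
  have hcard := card_insert_erase_inter B ha hb
  by_cases haB : a ∈ B <;> by_cases hbB : b ∈ B <;>
    simp only [haB, hbB, if_true, if_false, not_true, not_false_eq_true, add_zero,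
      add_left_inj] at hcard ⊢
  · rw [hcard]; ring
  · rw [← hcard, Nat.add_sub_cancel]; ring
  · rw [hcard]; ring
  · rw [hcard]; ring

/-- The action of the Laplacian of the Johnson graph of `K`-subsets of an `n`-set on the functions
of the intersection size with a fixed `K`-subset, see `lapMatrix_mul_intersectionMatrix`. For
`t = 0` the value at the truncated `t - 1` has coefficient `0`. -/
def johnsonOperator (K n : ℕ) (h : ℕ → ℝ) (t : ℕ) : ℝ :=
  ((K : ℝ) - t) ^ 2 * (h t - h (t + 1)) + t * (n - 2 * K + t) * (h t - h (t - 1))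

theorem lapMatrix_mul_intersectionMatrix (h : ℕ → ℝ) :
    (johnsonGraph α K).lapMatrix ℝ * intersectionMatrix α K h =
      intersectionMatrix α K (johnsonOperator K (Fintype.card α) h) := by
  ext C B
  set t := #(C.1 ∩ B.1) with ht
  have hCcard := Set.powersetCard.card_eq C
  have hCin : (#{a ∈ C.1 | a ∈ B.1} : ℝ) = t := by rw [filter_mem_eq_inter]
  have hCout : (#{a ∈ C.1 | a ∉ B.1} : ℝ) = K - t := by
    rw [← sdiff_eq_filter, eq_sub_iff_add_eq, ht]
    exact_mod_cast (card_sdiff_add_card_inter C.1 B.1).trans hCcard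
  have hDin : (#{b ∈ C.1ᶜ | b ∈ B.1} : ℝ) = K - t := by
    rw [filter_mem_eq_inter, inter_comm, ← sdiff_eq_inter_compl, eq_sub_iff_add_eq, ht,
      inter_comm C.1]
    exact_mod_cast (card_sdiff_add_card_inter B.1 C.1).trans (Set.powersetCard.card_eq B)
  have hDout : (#{b ∈ C.1ᶜ | b ∉ B.1} : ℝ) = Fintype.card α - 2 * K + t := by
    have hfilter := card_filter_add_card_filter_not (s := C.1ᶜ) (· ∈ B.1)
    have hcompl := card_compl_add_card C.1
    rw [hCcard] at hcompl
    rify at hfilter hcompl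
    linarith
  calc ((johnsonGraph α K).lapMatrix ℝ * intersectionMatrix α K h) C B
      = ∑ a ∈ C.1, ∑ b ∈ C.1ᶜ, (h t - h #(insert b (C.1.erase a) ∩ B.1)) :=
        johnsonGraph_lapMatrix_mulVec C fun D => h #(D ∩ B.1)
    _ = (K - t) * (K - t) * (h t - h (t + 1)) +
          t * (Fintype.card α - 2 * K + t) * (h t - h (t - 1)) := by
        rw [sum_congr rfl fun a ha => sum_congr rfl fun b hb =>
          sub_card_insert_erase_inter B.1 ha (mem_compl.1 hb) h]
        simp only [sum_add_distrib, ← sum_mul, ← mul_sum, sum_boole, ← ht, hCin, hCout, hDin, hDout]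
    _ = intersectionMatrix α K (johnsonOperator K (Fintype.card α) h) C B := by
        rw [← sq]; rfl

/-- The eigenvalues of the Laplacian of the Johnson graph of `K`-subsets of an `n`-set, indexed by
`w ≤ K` in decreasing order: `w = K` gives the constant functions. -/
def johnsonEigenvalue (K n w : ℕ) : ℝ :=
  ((K : ℝ) - w) * (n - K + w + 1)

theorem johnsonEigenvalue_nonneg {K n w : ℕ} (hw : w ≤ K) (hK : K ≤ n) :
    0 ≤ johnsonEigenvalue K n w := by
  have hw' : (w : ℝ) ≤ K := mod_cast hw
  have hK' : (K : ℝ) ≤ n := mod_cast hK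
  exact mul_nonneg (by linarith) (by linarith [w.cast_nonneg (α := ℝ)])

theorem johnsonEigenvalue_sub (K n w x : ℕ) : johnsonEigenvalue K n x - johnsonEigenvalue K n w =
    ((w : ℝ) - x) * (n - 2 * K + 1 + w + x) := by
  unfold johnsonEigenvalue; ring

theorem johnsonEigenvalue_strictAnti {K n : ℕ} (h : 2 * K ≤ n) :
    StrictAnti (johnsonEigenvalue K n) := by
  intro w x hwx
  have h' : (2 * K : ℝ) ≤ n := mod_cast h
  have hwx' : (w : ℝ) < x := mod_cast hwx
  rw [← sub_pos, johnsonEigenvalue_sub]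
  have : (0 : ℝ) ≤ w := w.cast_nonneg
  exact mul_pos (by linarith) (by linarith)

theorem johnsonOperator_choose {K j r : ℕ} (hK : j + 1 + r = K) (n t : ℕ) :
    johnsonOperator K n (fun x => x.choose (j + 1)) t =
      johnsonEigenvalue K n r * t.choose (j + 1) - ((r : ℝ) + 1) ^ 2 * t.choose j := by
  have hpascal : ((t + 1).choose (j + 1) : ℝ) = t.choose j + t.choose (j + 1) :=
    mod_cast Nat.choose_succ_succ t j
  have hlower : (t : ℝ) * (t.choose (j + 1) - (t - 1).choose (j + 1)) =
      (j + 1) * t.choose (j + 1) := by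
    cases t with
    | zero => simp
    | succ t =>
      have hmul : ((t + 1 : ℕ) : ℝ) * t.choose j = (t + 1).choose (j + 1) * (j + 1 : ℕ) :=
        mod_cast Nat.add_one_mul_choose_eq t j
      have hpascal' : ((t + 1).choose (j + 1) : ℝ) = t.choose j + t.choose (j + 1) :=
        mod_cast Nat.choose_succ_succ t j
      push_cast [Nat.add_sub_cancel] at hmul ⊢
      linear_combination (t + 1 : ℝ) * hpascal' + hmul
  have hright : (j + 1 : ℝ) * t.choose (j + 1) = (t - j) * t.choose j := by
    rcases le_or_gt j t with hjt | hjt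
    · have := Nat.choose_succ_right_eq t j
      rw [mul_comm, mul_comm (_ - _), ← Nat.cast_sub hjt]
      exact_mod_cast this
    · rw [Nat.choose_eq_zero_of_lt hjt, Nat.choose_eq_zero_of_lt (hjt.trans (Nat.lt_succ_self j))]
      simp
  subst hK
  simp only [johnsonOperator, johnsonEigenvalue, hpascal]
  push_cast
  linear_combination (n - 2 * (j + 1 + r : ℝ) + t) * hlower + (t - j - 2 * r - 2 : ℝ) * hright

theorem intersectionMatrix_choose_self (Ω : Type*) [DecidableEq Ω] :
    intersectionMatrix Ω K (fun t => t.choose K) = 1 := by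
  ext C B
  rw [intersectionMatrix, Matrix.of_apply]
  have hC := Set.powersetCard.card_eq C
  have hB := Set.powersetCard.card_eq B
  rcases eq_or_ne C B with rfl | hne
  · rw [inter_self, hC, Nat.choose_self, Matrix.one_apply_eq, Nat.cast_one]
  · rw [Matrix.one_apply_ne hne, Nat.choose_eq_zero_of_lt, Nat.cast_zero]
    refine lt_of_not_ge fun hle => hne ?_
    rw [Set.powersetCard.eq_iff_subset, ← inter_eq_left]
    exact eq_of_subset_of_card_le inter_subset_left (hC.trans_le hle)

open Polynomial

theorem aeval_lapMatrix_nodal {r : ℕ} (hr : r ≤ K) :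
    aeval ((johnsonGraph α K).lapMatrix ℝ)
        (Lagrange.nodal (range r) (johnsonEigenvalue K (Fintype.card α))) =
      ((-1) ^ r * (r.factorial : ℝ) ^ 2) •
        intersectionMatrix α K fun t => t.choose (K - r) := by
  induction r with
  | zero => simp [Lagrange.nodal_eq, intersectionMatrix_choose_self]
  | succ r ih =>
    have hj : K - (r + 1) + 1 + r = K := by omega
    rw [Lagrange.nodal_eq, prod_range_succ, mul_comm, ← Lagrange.nodal_eq, map_mul, ih (by omega),
      map_sub, aeval_X, aeval_C, sub_mul, Matrix.mul_smul, lapMatrix_mul_intersectionMatrix,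
      Algebra.algebraMap_eq_smul_one, smul_one_mul, show K - r = K - (r + 1) + 1 by omega]
    ext C B
    simp only [Matrix.sub_apply, Matrix.smul_apply, intersectionMatrix, Matrix.of_apply,
      smul_eq_mul, johnsonOperator_choose hj, Nat.factorial_succ]
    push_cast
    ring

theorem aeval_lapMatrix_nodal_eq_zero :
    aeval ((johnsonGraph α K).lapMatrix ℝ)
      (Lagrange.nodal (range (K + 1)) (johnsonEigenvalue K (Fintype.card α))) = 0 := by
  have htop : johnsonEigenvalue K (Fintype.card α) K = 0 := by
    rw [johnsonEigenvalue, sub_self, zero_mul]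
  rw [Lagrange.nodal_eq, prod_range_succ, mul_comm, ← Lagrange.nodal_eq, map_mul,
    aeval_lapMatrix_nodal le_rfl, htop, map_zero, sub_zero, aeval_X, Matrix.mul_smul,
    lapMatrix_mul_intersectionMatrix]
  ext C B
  simp [intersectionMatrix, johnsonOperator]

theorem exists_eq_johnsonEigenvalue_of_mem_spectrum {ξ : ℝ}
    (hξ : ξ ∈ spectrum ℝ ((johnsonGraph α K).lapMatrix ℝ)) :
    ∃ w ≤ K, ξ = johnsonEigenvalue K (Fintype.card α) w := by
  set f := Lagrange.nodal (range (K + 1)) (johnsonEigenvalue K (Fintype.card α)) with hf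
  have hmem := spectrum.subset_polynomial_aeval _ f ⟨ξ, hξ, rfl⟩
  rw [aeval_lapMatrix_nodal_eq_zero, spectrum.mem_iff, sub_zero] at hmem
  have hroot : f.eval ξ = 0 := by
    by_contra hne
    exact hmem ((IsUnit.mk0 _ hne).map (algebraMap ℝ _))
  rw [hf, Lagrange.eval_nodal, prod_eq_zero_iff] at hroot
  obtain ⟨w, hw, hw0⟩ := hroot
  exact ⟨w, Nat.lt_succ_iff.1 (mem_range.1 hw), sub_eq_zero.1 hw0⟩

theorem exists_lapMatrix_pow_eq_intersectionMatrix (r : ℕ) :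
    ∃ h : ℕ → ℝ, (johnsonGraph α K).lapMatrix ℝ ^ r = intersectionMatrix α K h ∧
      (∀ t, t + r < K → h t = 0) ∧ ∀ t, t + r = K → h t ≠ 0 := by
  induction r with
  | zero =>
    refine ⟨fun t => t.choose K, by rw [pow_zero, intersectionMatrix_choose_self],
      fun t ht => ?_, fun t ht => ?_⟩
    · exact Nat.cast_eq_zero.2 (Nat.choose_eq_zero_of_lt ht)
    · exact Nat.cast_ne_zero.2 (Nat.choose_pos ht.ge).ne'
  | succ r ih =>
    obtain ⟨h, hpow, hfar, hnear⟩ := ih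
    refine ⟨johnsonOperator K (Fintype.card α) h,
      by rw [pow_succ', hpow, lapMatrix_mul_intersectionMatrix], fun t ht => ?_, fun t ht => ?_⟩
    · rw [johnsonOperator, hfar t (by omega), hfar (t + 1) (by omega), hfar (t - 1) (by omega)]
      ring
    · have hKt : (K : ℝ) - t ≠ 0 := by
        rw [← ht]; push_cast; ring_nf; positivity
      rw [johnsonOperator, hfar t (by omega), hfar (t - 1) (by omega)]
      simp only [zero_sub, sub_zero, mul_zero, add_zero]
      exact mul_ne_zero (pow_ne_zero 2 hKt) (neg_ne_zero.2 (hnear (t + 1) (by omega)))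

theorem lapMatrix_pow_apply_eq_zero {r : ℕ} {C B : powersetCard α K}
    (h : r + #(C.1 ∩ B.1) < K) : ((johnsonGraph α K).lapMatrix ℝ ^ r) C B = 0 := by
  obtain ⟨f, hf, hfar, -⟩ := exists_lapMatrix_pow_eq_intersectionMatrix (α := α) (K := K) r
  rw [hf]
  exact hfar _ (by omega)

theorem aeval_lapMatrix_apply_eq_zero {f : ℝ[X]} {C B : powersetCard α K}
    (h : f.natDegree + #(C.1 ∩ B.1) < K) :
    aeval ((johnsonGraph α K).lapMatrix ℝ) f C B = 0 := by
  rw [aeval_eq_sum_range, Matrix.sum_apply]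
  refine sum_eq_zero fun r hr => ?_
  have := mem_range.1 hr
  rw [Matrix.smul_apply, lapMatrix_pow_apply_eq_zero (by omega), smul_zero]

theorem aeval_lapMatrix_apply_ne_zero {f : ℝ[X]} (hf : f ≠ 0) {C B : powersetCard α K}
    (h : f.natDegree + #(C.1 ∩ B.1) = K) :
    aeval ((johnsonGraph α K).lapMatrix ℝ) f C B ≠ 0 := by
  obtain ⟨p, hp, -, hnear⟩ :=
    exists_lapMatrix_pow_eq_intersectionMatrix (α := α) (K := K) f.natDegree
  rw [aeval_eq_sum_range, Matrix.sum_apply, sum_range_succ, sum_eq_zero, zero_add,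
    Matrix.smul_apply, hp]
  · exact mul_ne_zero (leadingCoeff_ne_zero.2 hf) (hnear _ (by omega))
  · intro r hr
    have := mem_range.1 hr
    rw [Matrix.smul_apply, lapMatrix_pow_apply_eq_zero (by omega), smul_zero]

theorem exists_card_inter_add_eq (B : powersetCard α K) {D : ℕ} (hDK : D ≤ K)
    (hD : D + K ≤ Fintype.card α) : ∃ C : powersetCard α K, #(C.1 ∩ B.1) + D = K := by
  have hBcard := Set.powersetCard.card_eq B
  obtain ⟨T, hTB, hT⟩ := exists_subset_card_eq (show K - D ≤ #B.1 by omega)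
  obtain ⟨S, hSB, hS⟩ := exists_subset_card_eq (s := B.1ᶜ) (n := D) (by rw [card_compl]; omega)
  have hdisj : Disjoint S B.1 := (disjoint_compl_left (a := B.1)).mono_left hSB
  refine ⟨⟨T ∪ S, ?_⟩, ?_⟩
  · rw [Set.powersetCard.mem_iff, card_union_of_disjoint (hdisj.symm.mono_left hTB)]
    omega
  · rw [union_inter_distrib_right, inter_eq_left.2 hTB, disjoint_iff_inter_eq_empty.1 hdisj,
      union_empty]
    omega

end JohnsonScheme

section FundamentalEquation

theorem alternating_sum_choose_mul_choose {q s x : ℕ} (hx : x ≤ q + 1 + s) :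
    ∑ i ∈ range (s + 1), (-1 : ℤ) ^ i * (q + i).choose i * x.choose (q + 1 + i) =
      if q < x then 1 else 0 := by
  induction x with
  | zero => simp [Nat.choose_eq_zero_of_lt (show 0 < q + 1 + _ by omega)]
  | succ x ih =>
    have hdiff : ∀ i, (-1 : ℤ) ^ i * (q + i).choose i * (x + 1).choose (q + 1 + i) =
        x.choose q * ((-1) ^ i * (x - q).choose i) +
          (-1) ^ i * (q + i).choose i * x.choose (q + 1 + i) := by
      intro i
      have hpascal : (x + 1).choose (q + 1 + i) = x.choose (q + i) + x.choose (q + 1 + i) := by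
        rw [show q + 1 + i = q + i + 1 by ring, Nat.choose_succ_succ]
      have hmul : x.choose (q + i) * (q + i).choose i = x.choose q * (x - q).choose i := by
        rw [← Nat.choose_symm_add, Nat.choose_mul (Nat.le_add_right q i), Nat.add_sub_cancel_left]
      rw [hpascal]
      zify at hmul
      push_cast
      linear_combination (-1) ^ i * hmul
    have htail : ∑ i ∈ range (s + 1), (-1 : ℤ) ^ i * (x - q).choose i =
        if x - q = 0 then 1 else 0 := by
      rw [← Int.alternating_sum_range_choose]
      refine eventually_constant_sum (fun i hi => ?_) (by omega)
      rw [Nat.choose_eq_zero_of_lt (by omega), Nat.cast_zero, mul_zero]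
    rw [sum_congr rfl fun i _ => hdiff i, sum_add_distrib, ← mul_sum, htail, ih (by omega)]
    rcases lt_trichotomy q x with hqx | rfl | hqx
    · simp [hqx, hqx.trans (Nat.lt_succ_self x), Nat.sub_eq_zero_iff_le, hqx.not_ge]
    · simp
    · simp [Nat.choose_eq_zero_of_lt hqx, hqx.not_gt, hqx.not_ge]

theorem sum_choose_mul_choose_eq_indicator {N s x : ℕ} (hs : s < N) (hx : x ≤ N) :
    ∑ t ∈ range (s + 1), (-1 : ℝ) ^ t * (N - 1 - t).choose (s - t) * x.choose (N - t) =
      (-1) ^ s * if N - s ≤ x then 1 else 0 := by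
  have hsum := alternating_sum_choose_mul_choose (q := N - 1 - s) (s := s) (x := x) (by omega)
  rw [← sum_flip]
  have hterm : ∀ i ∈ range (s + 1),
      (-1 : ℝ) ^ (s - i) * (N - 1 - (s - i)).choose (s - (s - i)) * x.choose (N - (s - i)) =
        (-1) ^ s *
          ((-1 : ℤ) ^ i * (N - 1 - s + i).choose i * x.choose (N - 1 - s + 1 + i) : ℤ) := by
    intro i hi
    have hi' : i ≤ s := Nat.lt_succ_iff.1 (mem_range.1 hi)
    have hsign : (-1 : ℝ) ^ (s - i) = (-1) ^ s * (-1) ^ i := by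
      rw [← pow_add, show s + i = s - i + 2 * i by omega, pow_add, pow_mul (-1) 2 i, neg_one_sq,
        one_pow, mul_one]
    rw [hsign, Nat.sub_sub_self hi', show N - 1 - (s - i) = N - 1 - s + i by omega,
      show N - (s - i) = N - 1 - s + 1 + i by omega]
    push_cast
    ring
  rw [sum_congr rfl hterm, ← mul_sum, ← Int.cast_sum, hsum]
  simp only [show N - 1 - s < x ↔ N - s ≤ x by omega, Int.cast_ite, Int.cast_one, Int.cast_zero]

theorem sum_powersetCard_choose_card_inter {Ω : Type*} [DecidableEq Ω] (C B : Finset Ω)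
    {N j : ℕ} (hj : j ≤ N) :
    ∑ X ∈ C.powersetCard N, (#(X ∩ B)).choose j =
      (#(C ∩ B)).choose j * (#C - j).choose (N - j) := by
  have habove : ∀ X ∈ C.powersetCard N,
      #(bipartiteAbove (fun X Y => Y ⊆ X) ((C ∩ B).powersetCard j) X) = (#(X ∩ B)).choose j := by
    intro X hX
    rw [← card_powersetCard]
    congr 1
    ext Y
    simp only [bipartiteAbove, mem_filter, mem_powersetCard, subset_inter_iff]
    have := (mem_powersetCard.1 hX).1
    exact ⟨fun h => ⟨⟨h.2, h.1.1.2⟩, h.1.2⟩, fun h => ⟨⟨⟨h.1.1.trans this, h.1.2⟩, h.2⟩, h.1.1⟩⟩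
  have hbelow : ∀ Y ∈ (C ∩ B).powersetCard j,
      #(bipartiteBelow (fun X Y => Y ⊆ X) (C.powersetCard N) Y) = (#C - j).choose (N - j) := by
    intro Y hY
    obtain ⟨hYC, hYj⟩ := mem_powersetCard.1 hY
    rw [← hYj,
      ← card_filter_powersetCard_subset _ _ _ (hYC.trans inter_subset_left) (hYj.trans_le hj)]
    rfl
  rw [← sum_congr rfl habove, sum_card_bipartiteAbove_eq_sum_card_bipartiteBelow,
    sum_congr rfl hbelow, sum_const, smul_eq_mul, card_powersetCard]

theorem card_powersetCard_filter_le_card_inter {Ω : Type*} [DecidableEq Ω] (C B : Finset Ω)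
    {N s : ℕ} (hs : s < N) :
    (-1 : ℝ) ^ s * #{X ∈ C.powersetCard N | N - s ≤ #(X ∩ B)} =
      ∑ t ∈ range (s + 1), (-1 : ℝ) ^ t * (N - 1 - t).choose (s - t) *
        ((#(C ∩ B)).choose (N - t) * (#C - (N - t)).choose t) := by
  have hindicator : ∀ X ∈ C.powersetCard N,
      ∑ t ∈ range (s + 1), (-1 : ℝ) ^ t * (N - 1 - t).choose (s - t) * (#(X ∩ B)).choose (N - t) =
        (-1) ^ s * if N - s ≤ #(X ∩ B) then 1 else 0 := fun X hX =>
    sum_choose_mul_choose_eq_indicator hs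
      ((card_le_card inter_subset_left).trans_eq (mem_powersetCard.1 hX).2)
  rw [← sum_boole, mul_sum, ← sum_congr rfl hindicator, sum_comm]
  refine sum_congr rfl fun t ht => ?_
  have hcount := sum_powersetCard_choose_card_inter C B (Nat.sub_le N t)
  rw [Nat.sub_sub_self (by have := mem_range.1 ht; omega)] at hcount
  rw [← mul_sum]
  congr 1
  exact_mod_cast hcount

end FundamentalEquation

section LloydTheorem

open Polynomial
open scoped Matrix MatrixOrder
open Set (powersetCard)

/-- The Lloyd polynomial of a `β(s + 1)` design with block size `K` on `n` points, where `N` is the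
size `d + 2s + 1` of the sets `X`. It is expanded in the Newton basis at the Johnson eigenvalues of
index `K - N`, `K - N + 1`, …. -/
noncomputable def lloydPolynomial (K n N s : ℕ) : ℝ[X] :=
  ∑ t ∈ range (s + 1),
    C ((N - 1 - t).choose (s - t) * (K - N + t).choose t / ((K - N + t).factorial : ℝ) ^ 2) *
      Lagrange.nodal (range t) fun l => johnsonEigenvalue K n (K - N + l)

theorem natDegree_lloydPolynomial_le (K n N s : ℕ) : (lloydPolynomial K n N s).natDegree ≤ s := by
  refine natDegree_sum_le_of_forall_le _ _ fun t ht => ?_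
  refine natDegree_C_mul_le _ _ |>.trans ?_
  rw [Lagrange.natDegree_nodal, card_range]
  exact Nat.lt_succ_iff.1 (mem_range.1 ht)

theorem eval_lloydPolynomial_head (K n N s : ℕ) :
    (lloydPolynomial K n N s).eval (johnsonEigenvalue K n (K - N)) =
      (N - 1).choose s / ((K - N).factorial : ℝ) ^ 2 := by
  rw [lloydPolynomial, eval_finsetSum, sum_range_succ', sum_eq_zero]
  · simp [Lagrange.nodal_eq]
  · intro t _
    rw [eval_mul, Lagrange.eval_nodal, prod_eq_zero (mem_range.2 t.succ_pos), mul_zero]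
    rw [add_zero, sub_self]

theorem lloydPolynomial_ne_zero {K n N s : ℕ} (hs : s < N) : lloydPolynomial K n N s ≠ 0 := by
  intro h
  have heval := eval_lloydPolynomial_head K n N s
  rw [h, eval_zero] at heval
  have hchoose : ((N - 1).choose s : ℝ) ≠ 0 := Nat.cast_ne_zero.2 (Nat.choose_pos (by omega)).ne'
  have hfact : ((K - N).factorial : ℝ) ≠ 0 := Nat.cast_ne_zero.2 (Nat.factorial_ne_zero _)
  exact div_ne_zero hchoose (pow_ne_zero 2 hfact) heval.symm

theorem aeval_lapMatrix_nodal_mul_lloydPolynomial {K N s : ℕ} (hs : s < N) (hN : N ≤ K)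
    (C B : powersetCard α K) :
    aeval ((johnsonGraph α K).lapMatrix ℝ)
        (Lagrange.nodal (range (K - N)) (johnsonEigenvalue K (Fintype.card α)) *
          lloydPolynomial K (Fintype.card α) N s) C B =
      (-1) ^ (K - N) * ((-1) ^ s * #{X ∈ C.1.powersetCard N | N - s ≤ #(X ∩ B.1)}) := by
  have hterm : ∀ t ∈ range (s + 1), aeval ((johnsonGraph α K).lapMatrix ℝ)
      (Lagrange.nodal (range (K - N)) (johnsonEigenvalue K (Fintype.card α)) *
        (Polynomial.C ((N - 1 - t).choose (s - t) * (K - N + t).choose t /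
            ((K - N + t).factorial : ℝ) ^ 2) *
          Lagrange.nodal (range t) fun l => johnsonEigenvalue K (Fintype.card α) (K - N + l)))
        C B = (-1) ^ (K - N) * ((-1 : ℝ) ^ t * (N - 1 - t).choose (s - t) *
          ((#(C.1 ∩ B.1)).choose (N - t) * (#C.1 - (N - t)).choose t)) := by
    intro t ht
    have hts : t ≤ s := Nat.lt_succ_iff.1 (mem_range.1 ht)
    have hnodal : Lagrange.nodal (range (K - N)) (johnsonEigenvalue K (Fintype.card α)) *
        Lagrange.nodal (range t) (fun l => johnsonEigenvalue K (Fintype.card α) (K - N + l)) =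
        Lagrange.nodal (range (K - N + t)) (johnsonEigenvalue K (Fintype.card α)) := by
      simp only [Lagrange.nodal_eq, prod_range_add]
    have hfact : ((K - N + t).factorial : ℝ) ≠ 0 := Nat.cast_ne_zero.2 (Nat.factorial_ne_zero _)
    rw [mul_left_comm, hnodal, map_mul, aeval_C, aeval_lapMatrix_nodal (by omega),
      Algebra.algebraMap_eq_smul_one, smul_one_mul, smul_smul, Matrix.smul_apply, smul_eq_mul,
      intersectionMatrix, Matrix.of_apply, Set.powersetCard.card_eq C,
      show K - (K - N + t) = N - t by omega, show K - (N - t) = K - N + t by omega, pow_add]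
    field_simp
  rw [lloydPolynomial, mul_sum, map_sum, Matrix.sum_apply, sum_congr rfl hterm, ← mul_sum,
    card_powersetCard_filter_le_card_inter _ _ hs]

/-- The characteristic vector of a family of `K`-subsets. -/
def blockIndicator (𝓑 : Finset (Finset α)) (K : ℕ) (B : powersetCard α K) : ℝ :=
  if B.1 ∈ 𝓑 then 1 else 0

variable {𝓑 : Finset (Finset α)} {v K d s : ℕ}

theorem IsBetaDesign.sum_card_powersetCard_filter (h𝓑 : IsBetaDesign 𝓑 v K d (s + 1))
    (C : powersetCard α K) :
    ∑ B ∈ 𝓑, #{X ∈ C.1.powersetCard (d + 2 * s + 1) | d + s + 1 ≤ #(X ∩ B)} =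
      K.choose (d + 2 * s + 1) := by
  have hone : ∀ X ∈ C.1.powersetCard (d + 2 * s + 1),
      #{B ∈ 𝓑 | d + s + 1 ≤ #(X ∩ B)} = 1 := by
    intro X hX
    obtain ⟨B, hB, huniq⟩ := h𝓑.2.2.2 X (by rw [(mem_powersetCard.1 hX).2]; omega)
    exact card_eq_one.2 ⟨B, eq_singleton_iff_unique_mem.2
      ⟨mem_filter.2 hB, fun D hD => huniq D (mem_filter.1 hD)⟩⟩
  have hcount := sum_card_bipartiteAbove_eq_sum_card_bipartiteBelow
    (s := C.1.powersetCard (d + 2 * s + 1)) (t := 𝓑) fun X B => d + s + 1 ≤ #(X ∩ B)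
  refine hcount.symm.trans ((sum_congr rfl hone).trans ?_)
  rw [sum_const, smul_eq_mul, mul_one, card_powersetCard, Set.powersetCard.card_eq C]

theorem IsBetaDesign.aeval_lapMatrix_mulVec_blockIndicator
    (h𝓑 : IsBetaDesign 𝓑 v K d (s + 1)) (hN : d + 2 * s + 1 ≤ K) :
    aeval ((johnsonGraph α K).lapMatrix ℝ)
      (X * (Lagrange.nodal (range (K - (d + 2 * s + 1))) (johnsonEigenvalue K v) *
        lloydPolynomial K v (d + 2 * s + 1) s)) *ᵥ blockIndicator 𝓑 K = 0 := by
  obtain ⟨⟨rfl, -, -, -, hblock, -⟩, -⟩ := id h𝓑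
  set N := d + 2 * s + 1
  set sign : ℝ := (-1) ^ (K - N) * (-1) ^ s
  have hconst : aeval ((johnsonGraph α K).lapMatrix ℝ)
      (Lagrange.nodal (range (K - N)) (johnsonEigenvalue K (Fintype.card α)) *
        lloydPolynomial K (Fintype.card α) N s) *ᵥ blockIndicator 𝓑 K =
      (sign * K.choose N) • fun _ => 1 := by
    ext C
    have hentry : ∀ B : powersetCard α K, aeval ((johnsonGraph α K).lapMatrix ℝ)
        (Lagrange.nodal (range (K - N)) (johnsonEigenvalue K (Fintype.card α)) *
          lloydPolynomial K (Fintype.card α) N s) C B * blockIndicator 𝓑 K B =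
        if B.1 ∈ 𝓑 then sign * #{X ∈ C.1.powersetCard N | d + s + 1 ≤ #(X ∩ B.1)} else 0 := by
      intro B
      rw [aeval_lapMatrix_nodal_mul_lloydPolynomial (by omega) hN, blockIndicator,
        show N - s = d + s + 1 by omega, mul_ite, mul_one, mul_zero, ← mul_assoc]
    have hsubtype : ∀ F : Finset α → ℝ,
        ∑ B : powersetCard α K, (if B.1 ∈ 𝓑 then F B.1 else 0) = ∑ B ∈ 𝓑, F B := by
      intro F
      rw [← sum_filter]
      refine sum_bij (fun B _ => B.1) (fun B hB => (mem_filter.1 hB).2)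
        (fun B _ C _ h => Subtype.ext h) (fun B hB => ?_) fun _ _ => rfl
      exact ⟨⟨B, Set.powersetCard.mem_iff.2 (hblock B hB)⟩, mem_filter.2 ⟨mem_univ _, hB⟩, rfl⟩
    rw [Matrix.mulVec, dotProduct, sum_congr rfl fun B _ => hentry B,
      hsubtype fun B => sign * #{X ∈ C.1.powersetCard N | d + s + 1 ≤ #(X ∩ B)}, ← mul_sum,
      ← Nat.cast_sum, h𝓑.sum_card_powersetCard_filter C, Pi.smul_apply, smul_eq_mul, mul_one]
  rw [map_mul, aeval_X, ← Matrix.mulVec_mulVec, hconst, Matrix.mulVec_smul,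
    SimpleGraph.lapMatrix_mulVec_const_eq_zero, smul_zero]

theorem posSemidef_aeval {ι : Type*} [Fintype ι] [DecidableEq ι] {A : Matrix ι ι ℝ}
    (hA : A.IsHermitian) {f : ℝ[X]} (hf : ∀ ξ ∈ spectrum ℝ A, 0 ≤ f.eval ξ) :
    (aeval A f).PosSemidef := by
  rw [← Matrix.nonneg_iff_posSemidef, ← cfc_polynomial f A hA.isSelfAdjoint]
  exact cfc_nonneg hf

theorem apply_eq_zero_of_posSemidef {ι : Type*} [Finite ι] {P : Matrix ι ι ℝ}
    (hP : P.PosSemidef) {j : ι} (hj : P j j = 0) (i : ι) : P i j = 0 := by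
  classical
  have := Fintype.ofFinite ι
  have h := hP.dotProduct_mulVec_zero_iff (Pi.single j 1)
  simp only [Matrix.mulVec_single_one, star_trivial, single_one_dotProduct, Matrix.col_apply, hj,
    true_iff] at h
  exact congrFun h i

theorem mulVec_eq_zero_of_notMem_spectrum {ι : Type*} [Fintype ι] [DecidableEq ι]
    {A : Matrix ι ι ℝ} {ξ : ℝ} (hξ : ξ ∉ spectrum ℝ A) {f : ℝ[X]} {x : ι → ℝ}
    (h : aeval A ((X - C ξ) * f) *ᵥ x = 0) : aeval A f *ᵥ x = 0 := by
  have hunit : IsUnit (A - algebraMap ℝ _ ξ) := by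
    rw [IsUnit.sub_iff]
    exact spectrum.notMem_iff.1 hξ
  refine Matrix.mulVec_injective_of_isUnit hunit ?_
  rw [Matrix.mulVec_zero, ← h, Matrix.mulVec_mulVec, map_mul, map_sub, aeval_X, aeval_C]

theorem IsDesign.aeval_lapMatrix_apply_self_eq_zero (h𝓑 : IsDesign 𝓑 v K d) {f : ℝ[X]}
    (hdeg : f.natDegree + d < K)
    (hf : aeval ((johnsonGraph α K).lapMatrix ℝ) f *ᵥ blockIndicator 𝓑 K = 0)
    {B : powersetCard α K} (hB : B.1 ∈ 𝓑) : aeval ((johnsonGraph α K).lapMatrix ℝ) f B B = 0 := by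
  obtain ⟨-, -, -, -, -, hinter, -⟩ := h𝓑
  have hrow : ∑ D, aeval ((johnsonGraph α K).lapMatrix ℝ) f B D * blockIndicator 𝓑 K D = 0 :=
    congrFun hf B
  rwa [sum_eq_single_of_mem B (mem_univ B), blockIndicator, if_pos hB, mul_one] at hrow
  intro D _ hDB
  rw [blockIndicator]
  split_ifs with hD
  · have := hinter B.1 hB D.1 hD fun h => hDB (Subtype.ext h.symm)
    rw [aeval_lapMatrix_apply_eq_zero (by omega), zero_mul]
  · rw [mul_zero]

theorem IsDesign.eq_zero_of_aeval_lapMatrix_mulVec_eq_zero (h𝓑 : IsDesign 𝓑 v K d)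
    (hKv : 2 * K ≤ v) {f : ℝ[X]} (hpos : ∀ w ≤ K, 0 ≤ f.eval (johnsonEigenvalue K v w))
    (hdeg : f.natDegree + d < K)
    (hf : aeval ((johnsonGraph α K).lapMatrix ℝ) f *ᵥ blockIndicator 𝓑 K = 0) : f = 0 := by
  obtain ⟨rfl, -, -, -, hblock, -, B, hB, -⟩ := id h𝓑
  by_contra hne
  obtain ⟨C, hC⟩ := exists_card_inter_add_eq ⟨B, Set.powersetCard.mem_iff.2 (hblock B hB)⟩
    (D := f.natDegree) (by omega) (by omega)
  refine aeval_lapMatrix_apply_ne_zero hne ((add_comm _ _).trans hC) ?_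
  refine apply_eq_zero_of_posSemidef (posSemidef_aeval (SimpleGraph.isHermitian_lapMatrix ℝ _) ?_)
    (h𝓑.aeval_lapMatrix_apply_self_eq_zero hdeg hf hB) C
  intro ξ hξ
  obtain ⟨w, hw, rfl⟩ := exists_eq_johnsonEigenvalue_of_mem_spectrum hξ
  exact hpos w hw

theorem neg_one_pow_mul_eval_nodal_range_nonneg {z : ℕ → ℝ} (hz : Antitone z) (g w : ℕ) :
    0 ≤ (-1) ^ g * (Lagrange.nodal (range g) z).eval (z w) := by
  have hprod := prod_const (s := range g) (-1 : ℝ)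
  rw [card_range] at hprod
  rw [Lagrange.eval_nodal, ← hprod, ← prod_mul_distrib]
  rcases lt_or_ge w g with hwg | hgw
  · rw [prod_eq_zero (mem_range.2 hwg)]
    rw [sub_self, mul_zero]
  · refine prod_nonneg fun l hl => ?_
    linarith [hz ((mem_range.1 hl).le.trans hgw)]

/-- Otherwise `X - ξ` could be cancelled from the relation satisfied by the characteristic vector
of `𝓑`, and the square of the remaining cofactor would contradict
`IsDesign.eq_zero_of_aeval_lapMatrix_mulVec_eq_zero`. -/
theorem IsBetaDesign.exists_eq_johnsonEigenvalue_of_isRoot (h𝓑 : IsBetaDesign 𝓑 v K d (s + 1))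
    (hKv : 2 * K ≤ v) (hN : d + 2 * s + 1 ≤ K) {ξ : ℝ}
    (hξ : (lloydPolynomial K v (d + 2 * s + 1) s).IsRoot ξ) :
    ∃ w ≤ K, ξ = johnsonEigenvalue K v w := by
  obtain ⟨⟨hv, -⟩, -⟩ := id h𝓑
  by_contra hspec
  set L := (johnsonGraph α K).lapMatrix ℝ
  have hξL : ξ ∉ spectrum ℝ L := fun h =>
    hspec (hv ▸ exists_eq_johnsonEigenvalue_of_mem_spectrum h)
  have hQ0 : lloydPolynomial K v (d + 2 * s + 1) s ≠ 0 := lloydPolynomial_ne_zero (by omega)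
  have hQdeg := natDegree_lloydPolynomial_le K v (d + 2 * s + 1) s
  have hdesign := h𝓑.aeval_lapMatrix_mulVec_blockIndicator hN
  obtain ⟨E, hE⟩ := dvd_iff_isRoot.2 hξ
  rw [hE] at hQ0 hQdeg hdesign
  have hE0 : E ≠ 0 := right_ne_zero_of_mul hQ0
  rw [natDegree_mul (X_sub_C_ne_zero ξ) hE0, natDegree_X_sub_C] at hQdeg
  set Φ := Lagrange.nodal (range (K - (d + 2 * s + 1))) (johnsonEigenvalue K v) with hΦ
  have hΦ0 : Φ ≠ 0 := Lagrange.nodal_ne_zero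
  have hf0 : C ((-1) ^ (K - (d + 2 * s + 1))) * (X * (Φ * E ^ 2)) ≠ 0 :=
    mul_ne_zero (C_ne_zero.2 (pow_ne_zero _ (by norm_num)))
      (mul_ne_zero X_ne_zero (mul_ne_zero hΦ0 (pow_ne_zero 2 hE0)))
  refine hf0 (h𝓑.1.eq_zero_of_aeval_lapMatrix_mulVec_eq_zero hKv (fun w hw => ?_) ?_ ?_)
  · have hz : 0 ≤ johnsonEigenvalue K v w := johnsonEigenvalue_nonneg hw (by omega)
    have hsign := neg_one_pow_mul_eval_nodal_range_nonneg
      (johnsonEigenvalue_strictAnti hKv).antitone (K - (d + 2 * s + 1)) w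
    rw [← hΦ] at hsign
    simp only [eval_mul, eval_C, eval_X, eval_pow]
    calc 0 ≤ johnsonEigenvalue K v w * eval (johnsonEigenvalue K v w) E ^ 2 *
          ((-1) ^ (K - (d + 2 * s + 1)) * eval (johnsonEigenvalue K v w) Φ) :=
        mul_nonneg (mul_nonneg hz (sq_nonneg _)) hsign
      _ = _ := by ring
  · rw [natDegree_C_mul (pow_ne_zero _ (by norm_num)), natDegree_mul X_ne_zero
      (mul_ne_zero hΦ0 (pow_ne_zero 2 hE0)), natDegree_X, natDegree_mul hΦ0 (pow_ne_zero 2 hE0),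
      hΦ, Lagrange.natDegree_nodal, card_range, natDegree_pow]
    omega
  · refine mulVec_eq_zero_of_notMem_spectrum hξL ?_
    rw [show (X - C ξ) * (C ((-1) ^ (K - (d + 2 * s + 1))) * (X * (Φ * E ^ 2))) =
      C ((-1) ^ (K - (d + 2 * s + 1))) * E * (X * (Φ * ((X - C ξ) * E))) by ring, map_mul,
      ← Matrix.mulVec_mulVec, hdesign, Matrix.mulVec_zero]

theorem johnsonEigenvalue_notMem_Ioo {K n w : ℕ} (hKn : 2 * K ≤ n) (x : ℕ) :
    johnsonEigenvalue K n x ∉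
      Set.Ioo (johnsonEigenvalue K n (w + 1)) (johnsonEigenvalue K n w) := by
  rintro ⟨hlt, hgt⟩
  have hanti := johnsonEigenvalue_strictAnti hKn
  have := hanti.lt_iff_gt.1 hlt
  have := hanti.lt_iff_gt.1 hgt
  omega

theorem IsBetaDesign.eval_lloydPolynomial_mul_eval_nonneg (h𝓑 : IsBetaDesign 𝓑 v K d (s + 1))
    (hKv : 2 * K ≤ v) (hN : d + 2 * s + 1 ≤ K) (w : ℕ) :
    0 ≤ (lloydPolynomial K v (d + 2 * s + 1) s).eval (johnsonEigenvalue K v w) *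
      (lloydPolynomial K v (d + 2 * s + 1) s).eval (johnsonEigenvalue K v (w + 1)) := by
  set Q := lloydPolynomial K v (d + 2 * s + 1) s
  by_contra! hneg
  have hlt : johnsonEigenvalue K v (w + 1) < johnsonEigenvalue K v w :=
    johnsonEigenvalue_strictAnti hKv w.lt_succ_self
  obtain ⟨ξ, hξ, hroot⟩ : (0 : ℝ) ∈ (fun y => Q.eval y) ''
      Set.Ioo (johnsonEigenvalue K v (w + 1)) (johnsonEigenvalue K v w) := by
    rcases mul_neg_iff.1 hneg with ⟨hw, hw'⟩ | ⟨hw, hw'⟩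
    · exact intermediate_value_Ioo hlt.le Q.continuous.continuousOn ⟨hw', hw⟩
    · exact intermediate_value_Ioo' hlt.le Q.continuous.continuousOn ⟨hw, hw'⟩
  obtain ⟨x, -, rfl⟩ := h𝓑.exists_eq_johnsonEigenvalue_of_isRoot hKv hN hroot
  exact johnsonEigenvalue_notMem_Ioo hKv x hξ

end LloydTheorem

section HahnPolynomial

open Polynomial

/-- The value `₃F₂(-u, u + b, -x; a, -M; 1)` of the Hahn polynomial of degree `u`, whose usual
parameters are `α = a - 1` and `β = b - a`. -/
noncomputable def hahn (a b M : ℝ) (x u : ℕ) : ℝ :=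
  ∑ t ∈ range (x + 1), ∏ l ∈ range t,
    ((l - u : ℝ) * (u + l + b) * (x - l)) / ((a + l) * (M - l) * (l + 1))

theorem hahn_eq_sum_range (a b M : ℝ) (x u : ℕ) :
    hahn a b M x u = ∑ t ∈ range (u + 1), ∏ l ∈ range t,
      ((l - u : ℝ) * (u + l + b) * (x - l)) / ((a + l) * (M - l) * (l + 1)) := by
  have hvanish : ∀ w : ℕ, w = x ∨ w = u → ∀ t ≥ w + 1, ∏ l ∈ range t,
      ((l - u : ℝ) * (u + l + b) * (x - l)) / ((a + l) * (M - l) * (l + 1)) = 0 := by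
    rintro w hw t ht
    refine prod_eq_zero (mem_range.2 (Nat.lt_of_succ_le ht)) ?_
    rcases hw with rfl | rfl <;> simp only [sub_self, zero_mul, mul_zero, zero_div]
  rcases le_total x u with hxu | hux
  · exact (eventually_constant_sum (hvanish x (.inl rfl)) (Nat.succ_le_succ hxu)).symm
  · exact eventually_constant_sum (hvanish u (.inr rfl)) (Nat.succ_le_succ hux)

theorem hahn_two {a n : ℝ} (ha : 0 < a) (hn : 1 ≤ n) (u : ℕ) :
    hahn a (a * n - 1) (2 * n) 2 u =
      (u - 1) * (a * n + u) * (u * (a * n + u - 1) - 2 * (2 * n - 1) * (a + 1)) /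
        (2 * (a * n) * (2 * n - 1) * (a + 1)) := by
  have h₁ : n * 2 - 1 ≠ 0 := by linarith
  simp only [hahn, sum_range_succ, prod_range_succ, sum_range_zero, prod_range_zero]
  push_cast
  field_simp
  ring

theorem hahn_degree_three {a n : ℝ} {s : ℕ} (ha : 0 < a) (h : 2 < s * n) :
    hahn a (a * n - 1) (s * n) s 3 =
      -(2 * (a + s) * (a + 2 * s) * (n - 1) * (n - 2) * (a * n + 3)) /
        (a * (a + 1) * (a + 2) * n * (s * n - 1) * (s * n - 2)) := by
  have h₁ : n * s - 1 ≠ 0 := by linarith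
  have h₂ : n * s - 2 ≠ 0 := by linarith
  obtain ⟨h₃, h₄⟩ : (s : ℝ) ≠ 0 ∧ n ≠ 0 := mul_ne_zero_iff.1 (by linarith)
  simp only [hahn_eq_sum_range, sum_range_succ, prod_range_succ, sum_range_zero, prod_range_zero]
  push_cast
  field_simp
  ring

theorem hahn_degree_four {a n : ℝ} {s : ℕ} (ha : 0 < a) (h : 3 < s * n) :
    hahn a (a * n - 1) (s * n) s 4 =
      3 * (a + s) * (n - 1) * (a * n + 4) *
        (n * (n - 1) * (a * s * (a + s)) - 2 * a ^ 2 * (n ^ 2 - 3 * n + 3) -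
          6 * s * (a + s) * (n ^ 2 - 5 * n + 5) - 4 * (a * n) - 6) /
        (a * (a + 1) * (a + 2) * (a + 3) * n * (s * n - 1) * (s * n - 2) * (s * n - 3)) := by
  have h₁ : n * s - 1 ≠ 0 := by linarith
  have h₂ : n * s - 2 ≠ 0 := by linarith
  have h₃ : n * s - 3 ≠ 0 := by linarith
  obtain ⟨h₄, h₅⟩ : (s : ℝ) ≠ 0 ∧ n ≠ 0 := mul_ne_zero_iff.1 (by linarith)
  simp only [hahn_eq_sum_range, sum_range_succ, prod_range_succ, sum_range_zero, prod_range_zero]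
  push_cast
  field_simp
  ring

theorem two_sq_add_six_mul_lt {a s : ℝ} (ha : 7 ≤ a) (hs : 3 ≤ s) (has : 17 ≤ a + s) :
    2 * a ^ 2 + 6 * s * (a + s) < a * s * (a + s) := by
  have hx : 0 ≤ a - 7 := by linarith
  have hy : 0 ≤ s - 3 := by linarith
  have hxy : 0 ≤ (a - 7) * (s - 3) := mul_nonneg hx hy
  nlinarith [mul_nonneg hxy hx, mul_nonneg hxy hy, mul_self_nonneg (a + s - 17)]

theorem hahn_degree_four_pos {a n : ℝ} {s : ℕ} (ha : 7 ≤ a) (hs : 3 ≤ s) (has : 17 ≤ a + s)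
    (hn : 2 ≤ n) : 0 < hahn a (a * n - 1) (s * n) s 4 := by
  have hs' : (3 : ℝ) ≤ s := mod_cast hs
  have hsn : 6 ≤ s * n := by nlinarith
  have hcofactor : 0 < n * (n - 1) * (a * s * (a + s)) - 2 * a ^ 2 * (n ^ 2 - 3 * n + 3) -
      6 * s * (a + s) * (n ^ 2 - 5 * n + 5) - 4 * (a * n) - 6 := by
    have hlead : 0 ≤ n * (n - 1) * (a * s * (a + s) - (2 * a ^ 2 + 6 * s * (a + s))) :=
      mul_nonneg (mul_nonneg (by linarith) (by linarith))
        (sub_nonneg.2 (two_sq_add_six_mul_lt ha hs' has).le)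
    have ha_term : 0 ≤ a * (a * (2 * n - 3) - 2 * n) := mul_nonneg (by linarith) (by nlinarith)
    have hs_term : 3 * 17 * 3 ≤ s * (a + s) * (4 * n - 5) := by gcongr; linarith
    linarith
  rw [hahn_degree_four (by linarith) (by linarith)]
  have : 0 < n - 1 := by linarith
  have : 0 < s * n - 1 := by linarith
  have : 0 < s * n - 2 := by linarith
  have : 0 < s * n - 3 := by linarith
  positivity

theorem hahn_degree_three_neg {a n : ℝ} {s : ℕ} (ha : 0 < a) (hs : 1 ≤ s) (hn : 2 < n) :
    hahn a (a * n - 1) (s * n) s 3 < 0 := by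
  have hs' : (1 : ℝ) ≤ s := mod_cast hs
  have hsn : 2 < s * n := by nlinarith
  have : 0 < n - 1 := by linarith
  have : 0 < n - 2 := by linarith
  have : 0 < s * n - 1 := by linarith
  have : 0 < s * n - 2 := by linarith
  rw [hahn_degree_three ha hsn, neg_div, neg_lt_zero]
  positivity

theorem hahn_two_four_neg {a n : ℝ} (ha : 0 < a) (hn : a + 7 < 2 * n) :
    hahn a (a * n - 1) (2 * n) 2 4 < 0 := by
  have hn₁ : 0 < 2 * n - 1 := by linarith
  have hn₀ : 0 < n := by linarith
  rw [hahn_two ha (by linarith)]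
  refine div_neg_of_neg_of_pos (mul_neg_of_pos_of_neg ?_ ?_) (by positivity)
  · push_cast
    nlinarith
  · push_cast
    linarith

theorem hahn_two_five_pos {a n : ℝ} (ha : 4 ≤ a) (hn : 1 ≤ n) :
    0 < hahn a (a * n - 1) (2 * n) 2 5 := by
  have hn₁ : 0 < 2 * n - 1 := by linarith
  rw [hahn_two (by linarith) hn]
  have hfactor : 0 < ((5 : ℕ) : ℝ) * (a * n + (5 : ℕ) - 1) - 2 * (2 * n - 1) * (a + 1) := by
    push_cast
    nlinarith
  have : (0 : ℝ) < (5 : ℕ) - 1 := by norm_num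
  positivity

theorem exists_hahn_mul_hahn_succ_neg {a n : ℝ} {s : ℕ} (ha : 7 ≤ a) (hs : 2 ≤ s)
    (has : 17 ≤ a + s) (hn : a + 7 < 2 * n) :
    ∃ u, hahn a (a * n - 1) (s * n) s u * hahn a (a * n - 1) (s * n) s (u + 1) < 0 := by
  rcases hs.eq_or_lt with rfl | hs
  · push_cast at has ⊢
    exact ⟨4, mul_neg_of_neg_of_pos (hahn_two_four_neg (by linarith) hn)
      (hahn_two_five_pos (by linarith) (by linarith))⟩
  · exact ⟨3, mul_neg_of_neg_of_pos (hahn_degree_three_neg (by linarith) (by omega) (by linarith))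
      (hahn_degree_four_pos ha hs has (by linarith))⟩

theorem choose_mul_choose_div_factorial_sq {M s g t : ℕ} (hs : s ≤ M) (ht : t ≤ s) :
    ((M - t).choose (s - t) * (g + t).choose t / ((g + t).factorial : ℝ) ^ 2 : ℝ) =
      M.choose s / (g.factorial : ℝ) ^ 2 *
        ∏ l ∈ range t, (s - l : ℝ) / ((g + 1 + l) * (M - l) * (l + 1)) := by
  induction t with
  | zero => simp
  | succ t ih =>
    obtain ⟨M, rfl⟩ : ∃ M', M = M' + 1 + t := ⟨M - (t + 1), by omega⟩
    obtain ⟨s, rfl⟩ : ∃ s', s = s' + 1 + t := ⟨s - (t + 1), by omega⟩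
    have hM : ((M + 1) * M.choose s : ℝ) = (M + 1).choose (s + 1) * (s + 1) :=
      mod_cast Nat.add_one_mul_choose_eq M s
    have hg : ((g + t + 1) * (g + t).choose t : ℝ) = (g + t + 1).choose (t + 1) * (t + 1) :=
      mod_cast Nat.add_one_mul_choose_eq (g + t) t
    have hfact : ((g + t).factorial : ℝ) ≠ 0 := Nat.cast_ne_zero.2 (Nat.factorial_ne_zero _)
    rw [prod_range_succ, ← mul_assoc, ← ih (by omega)]
    rw [show M + 1 + t - (t + 1) = M by omega, show s + 1 + t - (t + 1) = s by omega,
      Nat.add_sub_cancel, Nat.add_sub_cancel, ← add_assoc, Nat.factorial_succ]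
    push_cast
    rw [show (s + 1 + t - t : ℝ) = s + 1 by ring, show (M + 1 + t - t : ℝ) = M + 1 by ring]
    field_simp
    linear_combination (g + t + 1 : ℝ) * ((g + t + 1).choose (t + 1) * (t + 1) * hM -
      (M + 1).choose (s + 1) * (s + 1) * hg)

theorem eval_lloydPolynomial_johnsonEigenvalue {n M s g : ℕ} (hs : s ≤ M) (u : ℕ) :
    (lloydPolynomial (M + 1 + g) n (M + 1) s).eval (johnsonEigenvalue (M + 1 + g) n (g + u)) =
      M.choose s / (g.factorial : ℝ) ^ 2 * hahn (g + 1) (n - 2 * M - 1) M s u := by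
  rw [lloydPolynomial, eval_finsetSum, hahn, mul_sum]
  refine sum_congr rfl fun t ht => ?_
  rw [Nat.add_sub_cancel_left, Nat.add_sub_cancel, eval_mul, eval_C, Lagrange.eval_nodal,
    choose_mul_choose_div_factorial_sq hs (Nat.lt_succ_iff.1 (mem_range.1 ht)), mul_assoc,
    ← prod_mul_distrib]
  congr 1
  refine prod_congr rfl fun l _ => ?_
  rw [johnsonEigenvalue_sub]
  push_cast
  ring

theorem IsBetaDesign.hahn_mul_hahn_succ_nonneg {𝓑 : Finset (Finset α)} {v d s g : ℕ}
    (h𝓑 : IsBetaDesign 𝓑 v (d + 2 * s + 1 + g) d (s + 1)) (hv : 2 * (d + 2 * s + 1 + g) ≤ v)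
    (u : ℕ) :
    0 ≤ hahn (g + 1) (v - 2 * ↑(d + 2 * s) - 1) ↑(d + 2 * s) s u *
      hahn (g + 1) (v - 2 * ↑(d + 2 * s) - 1) ↑(d + 2 * s) s (u + 1) := by
  have hs : s ≤ d + 2 * s := by omega
  have hpos : 0 < ((d + 2 * s).choose s : ℝ) / (g.factorial : ℝ) ^ 2 :=
    div_pos (Nat.cast_pos.2 (Nat.choose_pos hs))
      (pow_pos (Nat.cast_pos.2 g.factorial_pos) 2)
  have hQ := h𝓑.eval_lloydPolynomial_mul_eval_nonneg hv (Nat.le_add_right _ g) (g + u)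
  rwa [add_assoc g u, eval_lloydPolynomial_johnsonEigenvalue hs,
    eval_lloydPolynomial_johnsonEigenvalue hs, mul_mul_mul_comm,
    mul_nonneg_iff_of_pos_left (mul_pos hpos hpos)] at hQ

end HahnPolynomial

variable {𝓑 : Finset (Finset α)} {v k d i : ℕ}

theorem IsBetaDesign.lt_add_seven {s : ℕ} (h𝓑 : IsBetaDesign 𝓑 v k d i)
    (h𝓑' : IsBetaDesign 𝓑 v k d (i + 1)) (hd : 0 < d) (hi : 17 ≤ i) (hs : 2 ≤ s)
    (hk : k = d + i + s) : i < s + 7 := by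
  by_contra! his
  obtain ⟨m, hm, rfl, hv⟩ := h𝓑.exists_parameters h𝓑' hd hk
  obtain ⟨g, rfl⟩ : ∃ g, i = g + 1 + s := ⟨i - s - 1, by omega⟩
  have hcompl : IsBetaDesign 𝓑.compls v (s * m + 2 * s + 1 + g) (s * m) (s + 1) := by
    convert h𝓑.compls using 1 <;> omega
  obtain ⟨u, hu⟩ := exists_hahn_mul_hahn_succ_neg (a := g + 1) (n := m + 2) (s := s)
    (mod_cast (by omega : 7 ≤ g + 1)) hs (mod_cast hi)
    (mod_cast (by omega : g + 1 + 7 < 2 * (m + 2)))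
  have hnonneg := hcompl.hahn_mul_hahn_succ_nonneg (by rw [hv, hk]; nlinarith) u
  have hM : ((s * m + 2 * s : ℕ) : ℝ) = s * (m + 2) := by push_cast; ring
  have hb : (v : ℝ) - 2 * (s * (m + 2)) - 1 = (g + 1) * (m + 2) - 1 := by
    rw [hv, hk]; push_cast; ring
  rw [hM, hb] at hnonneg
  exact hu.not_ge hnonneg

theorem IsBetaDesign.two_mul_sub_six_le (h𝓑 : IsBetaDesign 𝓑 v k d i)
    (h𝓑' : IsBetaDesign 𝓑 v k d (i + 1)) (hd : 0 < d) (hi : 17 ≤ i) (hkd : i + 2 ≤ k - d) :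
    2 * i - 6 ≤ k - d := by
  have := h𝓑.lt_add_seven h𝓑' hd hi (s := k - d - i) (by omega) (by omega)
  omega

theorem IsBetaDesign.sub_le_two_mul_iff (h𝓑 : IsBetaDesign 𝓑 v k d i)
    (h𝓑' : IsBetaDesign 𝓑 v k d (i + 1)) (hd : 0 < d) : k - d ≤ 2 * i ↔ v ≤ 2 * k := by
  obtain ⟨s, hk⟩ := Nat.exists_eq_add_of_le h𝓑.add_le_blockSize
  obtain ⟨m, hm, hdm, hv⟩ := h𝓑.exists_parameters h𝓑' hd hk
  calc k - d ≤ 2 * i ↔ s ≤ i := by omega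
    _ ↔ s * m ≤ i * m := (Nat.mul_le_mul_right_iff (by omega)).symm
    _ ↔ v ≤ 2 * k := by omega

theorem beta_design_kd_lower_both_general (h𝓑 : IsBetaDesign 𝓑 v k d i)
    (hsucc : IsBetaDesign 𝓑 v k d (i + 1)) (hd : 0 < d) (hi : 17 ≤ i) (hkd : i + 2 ≤ k - d) :
    2 * i - 6 ≤ k - d ∧ (k - d ≤ 2 * i ↔ v ≤ 2 * k) :=
  ⟨h𝓑.two_mul_sub_six_le hsucc hd hi hkd, h𝓑.sub_le_two_mul_iff hsucc hd⟩

/-- **Theorem 5 (3).** Let `𝓑` be a `β(i)` design with parameter `(v, k, d)`, `v ≤ 2k`,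
`k - d ≥ i + 2`, `d > 0` and `i ≥ 17`.  If `𝓑` is also a `β(i+1)` design, then
`2i - 6 ≤ k - d ≤ 2i`. -/
theorem beta_design_kd_lower_both (𝓑 : Finset (Finset α)) (v k d i : ℕ)
    (hB : IsBetaDesign 𝓑 v k d i) (hv : v ≤ 2 * k) (hkd : i + 2 ≤ k - d)
    (hd : 0 < d) (hi : 17 ≤ i)
    (hB' : IsBetaDesign 𝓑 v k d (i + 1)) :
    2 * i - 6 ≤ k - d ∧ k - d ≤ 2 * i := by
  obtain ⟨hlower, hupper⟩ := beta_design_kd_lower_both_general hB hB' hd hi hkd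
  exact ⟨hlower, hupper.2 hv⟩
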